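/- Let β ∈ (0,1). (i) If β ≤ σ, then for every X ≥ 0 the iterates F_βⁿ(X) converge to 0 as n → ∞ (so trajectories on the indifference set J spiral into the interior equilibrium). (ii) If β > σ, then for every X > 0 the iterates F_βⁿ(X) converge to X*_β = (1 − β + β²)(β² + β − 1)/((2−β)(1+β)²) as n → ∞ (so trajectories on J converge to the periodic orbit Γ). This is the Hopf-like bifurcation at β = σ of the dynamics on J. -/

import Mathlib

/-- The one-dimensional return map on the indifference set J of the Shapley
family. -/
noncomputable def retMap (β X : ℝ) : ℝ :=
  X*(1 + β)*(1 + 2*β)*(1 - β + β^2)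
    / ((2 - β)*(3*(1 + β)^2*X + (2 + β)*(1 - β + β^2)))

open Filter Topology

/-- For `a ≤ c` the iterates of `x ↦ a x / (b x + c)` from a nonnegative point decrease to `0`. -/
theorem tendsto_iterate_fractional_zero {f : ℝ → ℝ} {a b c : ℝ} (ha : 0 < a) (hb : 0 < b)
    (hac : a ≤ c) (hf : ∀ x, f x = a * x / (b * x + c)) {x : ℝ} (hx : 0 ≤ x) :
    Tendsto (fun n => f^[n] x) atTop (𝓝 0) := by
  have hc : 0 < c := ha.trans_le hac
  have hnonneg : ∀ n, 0 ≤ f^[n] x := by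
    intro n
    induction n with
    | zero => exact hx
    | succ n ih =>
      rw [Function.iterate_succ_apply', hf]
      positivity
  have hanti : Antitone fun n => f^[n] x := by
    refine antitone_nat_of_succ_le fun n => ?_
    have h := hnonneg n
    rw [Function.iterate_succ_apply', hf, div_le_iff₀ (by positivity)]
    nlinarith [mul_nonneg h h, mul_nonneg h (sub_nonneg.2 hac),
      mul_nonneg hb.le (mul_nonneg h h)]
  have hlim := tendsto_atTop_ciInf hanti ⟨0, by rintro _ ⟨n, rfl⟩; exact hnonneg n⟩
  set L := ⨅ n, f^[n] x
  have hL : 0 ≤ L := ge_of_tendsto' hlim hnonneg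
  have hden : 0 < b * L + c := by positivity
  have hcont : ContinuousAt f L := by
    rw [funext hf]
    exact ContinuousAt.div (by fun_prop) (by fun_prop) hden.ne'
  have hfix : f L = L := isFixedPt_of_tendsto_iterate hlim hcont
  rw [hf, div_eq_iff hden.ne'] at hfix
  have hL0 : L = 0 := by
    by_contra hne
    have hpos : 0 < L := lt_of_le_of_ne hL (Ne.symm hne)
    nlinarith [mul_pos hb (mul_pos hpos hpos), mul_nonneg hL (sub_nonneg.2 hac)]
  rwa [hL0] at hlim

/-- For `c < a` the iterates of `x ↦ a x / (b x + c)` from a positive point converge to the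
positive fixed point: in the coordinate `x⁻¹` the map is an affine contraction of ratio `c / a`. -/
theorem tendsto_iterate_fractional_fixedPt {f : ℝ → ℝ} {a b c : ℝ} (hb : 0 < b) (hc : 0 < c)
    (hca : c < a) (hf : ∀ x, f x = a * x / (b * x + c)) {x : ℝ} (hx : 0 < x) :
    Tendsto (fun n => f^[n] x) atTop (𝓝 ((a - c) / b)) := by
  have ha : 0 < a := hc.trans hca
  have hd : 0 < a - c := sub_pos.2 hca
  have hpos : ∀ n, 0 < f^[n] x := by
    intro n
    induction n with
    | zero => exact hx
    | succ n ih =>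
      rw [Function.iterate_succ_apply', hf]
      positivity
  have hinv : ∀ n, (f^[n] x)⁻¹ = b / (a - c) + (c / a) ^ n * (x⁻¹ - b / (a - c)) := by
    intro n
    induction n with
    | zero => simp
    | succ n ih =>
      have h := hpos n
      have hstep : (f (f^[n] x))⁻¹ = b / a + c / a * (f^[n] x)⁻¹ := by
        rw [hf]
        field_simp
      rw [Function.iterate_succ_apply', hstep, ih, pow_succ]
      field_simp
      ring
  have hgeom : Tendsto (fun n : ℕ => (c / a) ^ n) atTop (𝓝 0) :=
    tendsto_pow_atTop_nhds_zero_of_lt_one (by positivity) ((div_lt_one ha).2 hca)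
  have hlim : Tendsto (fun n => (f^[n] x)⁻¹) atTop (𝓝 (b / (a - c))) := by
    simp_rw [hinv]
    simpa using (hgeom.mul_const (x⁻¹ - b / (a - c))).const_add (b / (a - c))
  simpa using hlim.inv₀ (by positivity)

/-- the Hopf-like bifurcation at β = σ = (√5−1)/2 of the flow on
the indifference set J: for β ∈ (0,1], if β ≤ σ then all iterates of F_β from
X ≥ 0 tend to 0, while if β > σ they tend, from any X > 0, to the fixed point
X*_β = (1−β+β²)(β²+β−1)/((2−β)(1+β)²). -/
theorem stmt17 (β : ℝ) (hβ : β ∈ Set.Ioo (0 : ℝ) 1) :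
    (β ≤ (Real.sqrt 5 - 1)/2 → ∀ X : ℝ, 0 ≤ X →
      Filter.Tendsto (fun n => (retMap β)^[n] X) Filter.atTop (nhds 0)) ∧
    ((Real.sqrt 5 - 1)/2 < β → ∀ X : ℝ, 0 < X →
      Filter.Tendsto (fun n => (retMap β)^[n] X) Filter.atTop
        (nhds ((1 - β + β^2)*(β^2 + β - 1)/((2 - β)*(1 + β)^2)))) := by
  obtain ⟨h0, h1⟩ := hβ
  have hq : 0 < 1 - β + β ^ 2 := by nlinarith
  have h2 : 0 < 2 - β := by linarith
  have hsq : Real.sqrt 5 ^ 2 = 5 := Real.sq_sqrt (by norm_num)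
  have hs : 0 ≤ Real.sqrt 5 := Real.sqrt_nonneg 5
  have hf : ∀ x, retMap β x = (1 + β) * (1 + 2 * β) * (1 - β + β ^ 2) * x /
      (3 * (2 - β) * (1 + β) ^ 2 * x + (2 - β) * (2 + β) * (1 - β + β ^ 2)) := by
    intro x
    unfold retMap
    congr 1 <;> ring
  have hdiff : (1 + β) * (1 + 2 * β) * (1 - β + β ^ 2) - (2 - β) * (2 + β) * (1 - β + β ^ 2) =
      3 * ((1 - β + β ^ 2) * (β ^ 2 + β - 1)) := by ring
  constructor
  · intro hle X hX
    have hσ : β ^ 2 + β - 1 ≤ 0 := by nlinarith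
    refine tendsto_iterate_fractional_zero (by positivity) (by positivity) ?_ hf hX
    linarith [mul_nonpos_of_nonneg_of_nonpos hq.le hσ]
  · intro hlt X hX
    have hσ : 0 < β ^ 2 + β - 1 := by nlinarith
    have hlim := tendsto_iterate_fractional_fixedPt (by positivity) (by positivity)
      (by linarith [mul_pos hq hσ]) hf hX
    rwa [hdiff, mul_assoc 3 (2 - β), mul_div_mul_left _ _ three_ne_zero] at hlim
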